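/- Let q be a braiding matrix with connected Dynkin diagram such that B_q is finite dimensional, and let B be a pre-Nichols algebra of q with finite GKdim. If i ∈ I_θ is a non-Cartan vertex (i.e. q̃_{ij} ≠ q_{ii}^{c_{ij}} for some j ≠ i), then x_i^{N_i} = 0 in B, where N_i = ord(q_{ii}). -/

import Mathlib

/-
Common framework for formalizing statements from
"Finite GK-dimensional pre-Nichols algebras of (super)modular and unidentified type"
(Angiono, Campagnolo, Sanmarco).

We work over `ℂ` (an algebraically closed field of characteristic zero).
A braiding matrix is `q : Fin θ → Fin θ → ℂˣ`.  The tensor algebra `T(V)` of the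
associated braided vector space of diagonal type is realized as the free algebra
on `Fin θ`.  The braided bialgebra structure on `T(V)` (the braided coproduct,
uniquely determined by the braiding matrix) is packaged in the structure
`BraidedStr`: its fields characterize it uniquely, so quantifying over
`S : BraidedStr θ q` is equivalent to using "the" braided coproduct.

A pre-Nichols algebra of `q` is the quotient `T(V)/I` by an ℕ₀-homogeneous
(two-sided) braided bi-ideal `I` generated in degrees ≥ 2 (`IsPreNicholsIdeal`);
such an ideal is automatically contained in the defining ideal `Jq` of the
Nichols algebra, which is the largest such ideal.  A statement
"`x = 0` holds in the pre-Nichols algebra `T(V)/I`" is formalized as `x ∈ I`.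
-/

open scoped TensorProduct

noncomputable section

namespace PreNicholsPaper

/-- The tensor algebra `T(V)` of the braided vector space of diagonal type of rank `θ`. -/
abbrev TV (θ : ℕ) := FreeAlgebra ℂ (Fin θ)

/-- The generator `x_i` of `T(V)`. -/
def gen (θ : ℕ) (i : Fin θ) : TV θ := FreeAlgebra.ι ℂ i

/-- The monomial `x_{i_1} ⋯ x_{i_n}` associated to a word. -/
def wordElem (θ : ℕ) (w : List (Fin θ)) : TV θ := (w.map (gen θ)).prod

/-- The multidegree in `ℕ₀^θ` of a word. -/
def degW (θ : ℕ) (w : List (Fin θ)) : Fin θ → ℕ := fun i => w.count i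

/-- `α_i`, the `i`-th canonical basis vector of `ℕ₀^θ`. -/
def δ (θ : ℕ) (i : Fin θ) : Fin θ → ℕ := fun k => if k = i then 1 else 0

/-- The bilinear form `ℕ₀^θ × ℕ₀^θ → ℂˣ` attached to the braiding matrix,
`q(α_i, α_j) = q_{ij}`, evaluated in `ℂ`. -/
def qf {θ : ℕ} (q : Fin θ → Fin θ → ℂˣ) (a b : Fin θ → ℕ) : ℂ :=
  ∏ i : Fin θ, ∏ j : Fin θ, (q i j : ℂ) ^ (a i * b j)

/-- `q̃_{ij} = q_{ij} q_{ji}`. -/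
def qtil {θ : ℕ} (q : Fin θ → Fin θ → ℂˣ) (i j : Fin θ) : ℂ := (q i j : ℂ) * (q j i : ℂ)

/-- The braided commutator `[u,v]_c = uv - q(a,b) vu` of elements `u, v`
which are homogeneous of multidegrees `a`, `b` respectively. -/
def brk {θ : ℕ} (q : Fin θ → Fin θ → ℂˣ) (a b : Fin θ → ℕ) (u v : TV θ) : TV θ :=
  u * v - qf q a b • (v * u)

/-- `(ad_c x_i) y = x_i y - q(α_i, b) y x_i` for `y` homogeneous of multidegree `b`. -/
def ad1 {θ : ℕ} (q : Fin θ → Fin θ → ℂˣ) (i : Fin θ) (b : Fin θ → ℕ) (y : TV θ) : TV θ :=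
  brk q (δ θ i) b (gen θ i) y

/-- The iterated braided adjoint `x_{i_1 i_2 ⋯ i_k} = (ad_c x_{i_1}) x_{i_2 ⋯ i_k}`. -/
def xw {θ : ℕ} (q : Fin θ → Fin θ → ℂˣ) : List (Fin θ) → TV θ
  | [] => 1
  | [i] => gen θ i
  | i :: w => ad1 q i (degW θ w) (xw q w)

/-- `(ad_c x_i)^m x_j`. -/
def adpow {θ : ℕ} (q : Fin θ → Fin θ → ℂˣ) (i j : Fin θ) : ℕ → TV θ
  | 0 => gen θ j
  | m + 1 => ad1 q i (fun k => m * δ θ i k + δ θ j k) (adpow q i j m)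

/-- The homogeneous component of total degree `n` of `T(V)`. -/
def homogTot (θ : ℕ) (n : ℕ) : Submodule ℂ (TV θ) :=
  Submodule.span ℂ {x | ∃ w : List (Fin θ), w.length = n ∧ x = wordElem θ w}

/-- The homogeneous component of multidegree `d ∈ ℕ₀^θ` of `T(V)`. -/
def homogD (θ : ℕ) (d : Fin θ → ℕ) : Submodule ℂ (TV θ) :=
  Submodule.span ℂ {x | ∃ w : List (Fin θ), degW θ w = d ∧ x = wordElem θ w}

/-- The braided bialgebra structure on `T(V)` determined by the braiding matrix `q`:
the braided coproduct `Δ` together with the multiplication `mulB` of the braided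
tensor product `T(V) ⊗ T(V)`.  These axioms determine `Δ` and `mulB` uniquely. -/
structure BraidedStr (θ : ℕ) (q : Fin θ → Fin θ → ℂˣ) where
  Δ : TV θ →ₗ[ℂ] TensorProduct ℂ (TV θ) (TV θ)
  mulB : TensorProduct ℂ (TV θ) (TV θ) →ₗ[ℂ]
    TensorProduct ℂ (TV θ) (TV θ) →ₗ[ℂ] TensorProduct ℂ (TV θ) (TV θ)
  mulB_spec : ∀ (a d : TV θ) (wb wc : List (Fin θ)),
    mulB (a ⊗ₜ[ℂ] wordElem θ wb) (wordElem θ wc ⊗ₜ[ℂ] d)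
      = qf q (degW θ wb) (degW θ wc) • ((a * wordElem θ wc) ⊗ₜ[ℂ] (wordElem θ wb * d))
  Δ_one : Δ 1 = 1 ⊗ₜ[ℂ] 1
  Δ_gen : ∀ i, Δ (gen θ i) = gen θ i ⊗ₜ[ℂ] 1 + 1 ⊗ₜ[ℂ] gen θ i
  Δ_mul : ∀ u v : TV θ, Δ (u * v) = mulB (Δ u) (Δ v)

variable {θ : ℕ} {q : Fin θ → Fin θ → ℂˣ}

/-- `x` is a primitive element. -/
def IsPrimitiveIn (S : BraidedStr θ q) (x : TV θ) : Prop :=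
  S.Δ x = x ⊗ₜ[ℂ] (1 : TV θ) + (1 : TV θ) ⊗ₜ[ℂ] x

/-- The submodule `I ⊗ T(V) + T(V) ⊗ J` of `T(V) ⊗ T(V)`. -/
def mixedPair (I J : Submodule ℂ (TV θ)) : Submodule ℂ (TensorProduct ℂ (TV θ) (TV θ)) :=
  Submodule.span ℂ
    ({x | ∃ a b : TV θ, a ∈ I ∧ x = a ⊗ₜ[ℂ] b} ∪ {x | ∃ a b : TV θ, b ∈ J ∧ x = a ⊗ₜ[ℂ] b})

/-- The submodule `I ⊗ T(V) + T(V) ⊗ I` of `T(V) ⊗ T(V)`. -/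
def mixedSub (I : Submodule ℂ (TV θ)) : Submodule ℂ (TensorProduct ℂ (TV θ) (TV θ)) :=
  mixedPair I I

/-- `I` is the defining ideal of a pre-Nichols algebra of `q`：an ℕ₀-homogeneous
two-sided (bi-)ideal of `T(V)` generated in degrees `≥ 2` which is also a coideal.
Such an ideal is automatically contained in the defining ideal `Jq` of the Nichols
algebra, and the pre-Nichols algebra is the quotient `T(V)/I`. -/
structure IsPreNicholsIdeal (S : BraidedStr θ q) (I : Submodule ℂ (TV θ)) : Prop where
  mul_left : ∀ a x : TV θ, x ∈ I → a * x ∈ I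
  mul_right : ∀ a x : TV θ, x ∈ I → x * a ∈ I
  homog_ge2 : I = Submodule.span ℂ {x | x ∈ I ∧ ∃ n, 2 ≤ n ∧ x ∈ homogTot θ n}
  coideal : ∀ x ∈ I, S.Δ x ∈ mixedSub I

/-- The defining ideal `J_q` of the Nichols algebra `B_q = T(V)/J_q`:
the maximal homogeneous braided Hopf ideal generated in degrees `≥ 2`. -/
def Jq (S : BraidedStr θ q) : Submodule ℂ (TV θ) := sSup {I | IsPreNicholsIdeal S I}

/-- The standard filtration of `T(V)`: span of words of length `≤ n`. -/
def Wfil (θ : ℕ) (n : ℕ) : Submodule ℂ (TV θ) :=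
  Submodule.span ℂ {x | ∃ w : List (Fin θ), w.length ≤ n ∧ x = wordElem θ w}

/-- The quotient algebra `T(V)/I` has finite Gelfand–Kirillov dimension, i.e.
the standard filtration of the (finitely generated) quotient has polynomial growth. -/
def FinGK (I : Submodule ℂ (TV θ)) : Prop :=
  ∃ C d : ℕ, ∀ n : ℕ, Module.finrank ℂ ((Wfil θ n).map I.mkQ) ≤ C * (n + 1) ^ d

/-- The Gelfand–Kirillov dimension of the quotient algebra `T(V)/I`. -/
def GKdim (I : Submodule ℂ (TV θ)) : ℝ :=
  Filter.limsup
    (fun n : ℕ => Real.log (Module.finrank ℂ ((Wfil θ n).map I.mkQ)) / Real.log n)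
    Filter.atTop

/-- `I` defines an eminent pre-Nichols algebra: it is a finite-GKdim pre-Nichols
algebra, and every finite-GKdim pre-Nichols algebra of `q` is a quotient of it. -/
def IsEminent (S : BraidedStr θ q) (I : Submodule ℂ (TV θ)) : Prop :=
  IsPreNicholsIdeal S I ∧ FinGK I ∧
    ∀ I' : Submodule ℂ (TV θ), IsPreNicholsIdeal S I' → FinGK I' → I ≤ I'

/-- The Dynkin diagram of the braiding matrix `q`: vertices `Fin θ`, an edge between
`i ≠ j` iff `q̃_{ij} ≠ 1`. -/
def dynkin {θ : ℕ} (q : Fin θ → Fin θ → ℂˣ) : SimpleGraph (Fin θ) :=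
  SimpleGraph.fromRel (fun i j => qtil q i j ≠ 1)

/-- The quantum number `(m)_t = 1 + t + ⋯ + t^{m-1}`. -/
def qnum (t : ℂ) (m : ℕ) : ℂ := ∑ k ∈ Finset.range m, t ^ k

/-- The set of `n ∈ ℕ₀` such that `(n+1)_{q_{ii}} (1 - q_{ii}^n q̃_{ij}) = 0`,
i.e. such that `(ad_c x_i)^{n+1} x_j = 0` in the Nichols algebra.  The entry
`c_{ij}` of the generalized Cartan matrix is `-(min of this set)`. -/
def cSet {θ : ℕ} (q : Fin θ → Fin θ → ℂˣ) (i j : Fin θ) : Set ℕ :=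
  {n | qnum (q i i : ℂ) (n + 1) * (1 - (q i i : ℂ) ^ n * qtil q i j) = 0}

/-- The generalized Cartan matrix of `q`. -/
def cij {θ : ℕ} (q : Fin θ → Fin θ → ℂˣ) (i j : Fin θ) : ℤ :=
  if i = j then 2 else -(Int.ofNat (sInf (cSet q i j)))

/-- All entries `c_{ij}` are defined at the vertex `i`. -/
def reflectable {θ : ℕ} (q : Fin θ → Fin θ → ℂˣ) (i : Fin θ) : Prop :=
  ∀ j, j ≠ i → (cSet q i j).Nonempty

/-- The `i`-th reflection of the braiding matrix:
`(r_i q)_{jk} = q(s_i α_j, s_i α_k)` where `s_i α_j = α_j - c_{ij} α_i`. -/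
def reflectMat {θ : ℕ} (q : Fin θ → Fin θ → ℂˣ) (i : Fin θ) : Fin θ → Fin θ → ℂˣ :=
  fun j k =>
    q j k * q j i ^ (-(cij q i k)) * q i k ^ (-(cij q i j)) * q i i ^ (cij q i j * cij q i k)

/-- The reflection `s_i` acting on `ℤ^θ`. -/
def sRefl {θ : ℕ} (q : Fin θ → Fin θ → ℂˣ) (i : Fin θ) (β : Fin θ → ℤ) : Fin θ → ℤ :=
  fun k => β k - (if k = i then ∑ j, cij q i j * β j else 0)

/-- The (real) roots of `q`, together with the base points of the Weyl groupoid at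
which they live: pairs `(q', β)` obtained from a simple root of `q` by iterated
reflections. -/
inductive ReachRoot {θ : ℕ} (q₀ : Fin θ → Fin θ → ℂˣ) :
    (Fin θ → Fin θ → ℂˣ) → (Fin θ → ℤ) → Prop
  | simple (j : Fin θ) : ReachRoot q₀ q₀ (fun k => if k = j then 1 else 0)
  | reflect {q' : Fin θ → Fin θ → ℂˣ} {β : Fin θ → ℤ} (i : Fin θ) :
      ReachRoot q₀ q' β → ReachRoot q₀ (reflectMat q' i) (sRefl q' i β)

/-- `q` has a finite (generalized) root system: all reflections are defined at every
point of the Weyl groupoid, and the set of roots so obtained is finite. -/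
def FiniteRootSystem {θ : ℕ} (q : Fin θ → Fin θ → ℂˣ) : Prop :=
  (∀ q' i, (∃ β, ReachRoot q q' β) → reflectable q' i) ∧
    Set.Finite {β : Fin θ → ℤ | ∃ q', ReachRoot q q' β}

/-- Conjecture (Andruskiewitsch–Angiono–Heckenberger): the root system of a Nichols
algebra of diagonal type with finite Gelfand–Kirillov dimension is finite. -/
def AAH : Prop :=
  ∀ (θ : ℕ) (q : Fin θ → Fin θ → ℂˣ) (S : BraidedStr θ q), FinGK (Jq S) → FiniteRootSystem q

/-- The two-sided ideal of `T(V)` generated by a set. -/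
def idealGen (θ : ℕ) (s : Set (TV θ)) : Submodule ℂ (TV θ) :=
  Submodule.span ℂ {x | ∃ g ∈ s, ∃ a b : TV θ, x = a * g * b}

end PreNicholsPaper

namespace PreNicholsPaper

/-- The iterated braided adjoint `(ad_c y)^n x` for a braiding with `q_{yy} = 1`, `q_{yx} = b`. -/
def adIter {A : Type*} [Ring A] [Algebra ℂ A] (x y : A) (b : ℂ) : ℕ → A
  | 0 => x
  | n + 1 => y * adIter x y b n - b • (adIter x y b n * y)

/-- Linear maps `F`, `G` that act on a subspace `U` as the skew derivations dual to `y` and `x`,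
for the braiding with `q_{yy} = 1`, `q_{xy} = a`, `q_{yx} = b` and `q_{xx} = p`. -/
structure IsSkewPair {A : Type*} [Ring A] [Algebra ℂ A] (U : Submodule ℂ A) (F G : A →ₗ[ℂ] A)
    (x y : A) (a b p : ℂ) : Prop where
  one_mem : (1 : A) ∈ U
  y_mul_mem : ∀ u ∈ U, y * u ∈ U
  x_mul_mem : ∀ u ∈ U, x * u ∈ U
  F_mem : ∀ u ∈ U, F u ∈ U
  F_y_mul : ∀ u ∈ U, F (y * u) = u + y * F u
  F_x_mul : ∀ u ∈ U, F (x * u) = a • (x * F u)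
  G_y_mul : ∀ u ∈ U, G (y * u) = b • (y * G u)
  G_x_mul : ∀ u ∈ U, G (x * u) = u + p • (x * G u)
  F_one : F 1 = 0
  G_one : G 1 = 0

namespace IsSkewPair

variable {A : Type*} [Ring A] [Algebra ℂ A] {U : Submodule ℂ A} {F G : A →ₗ[ℂ] A}
  {x y : A} {a b p : ℂ}

lemma adIter_mul_mem (h : IsSkewPair U F G x y a b p) (n : ℕ) :
    ∀ u ∈ U, adIter x y b n * u ∈ U := by
  induction n with
  | zero => exact h.x_mul_mem
  | succ n ih =>
    intro u hu
    simp only [adIter, sub_mul, smul_mul_assoc, mul_assoc]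
    exact U.sub_mem (h.y_mul_mem _ (ih u hu)) (U.smul_mem _ (ih _ (h.y_mul_mem u hu)))

lemma F_adIter_succ_mul (h : IsSkewPair U F G x y a b p) (n : ℕ) : ∀ u ∈ U,
    F (adIter x y b (n + 1) * u) = (((n : ℂ) + 1) * (1 - a * b)) • (adIter x y b n * u)
      + a • (adIter x y b (n + 1) * F u) := by
  induction n with
  | zero =>
    intro u hu
    simp only [adIter, sub_mul, smul_mul_assoc, mul_assoc, map_sub, map_smul]
    rw [h.F_y_mul _ (h.x_mul_mem u hu), h.F_x_mul _ (h.y_mul_mem u hu), h.F_x_mul u hu,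
      h.F_y_mul u hu]
    simp only [mul_add, mul_smul_comm, Nat.cast_zero]
    module
  | succ n ih =>
    intro u hu
    rw [adIter]
    simp only [sub_mul, smul_mul_assoc, mul_assoc, map_sub, map_smul]
    rw [h.F_y_mul _ (h.adIter_mul_mem _ u hu), ih _ (h.y_mul_mem u hu), ih u hu, h.F_y_mul u hu]
    have e : adIter x y b (n + 1) * u
        = y * (adIter x y b n * u) - b • (adIter x y b n * (y * u)) := by
      simp only [adIter, sub_mul, smul_mul_assoc, mul_assoc]
    have e' : y * (adIter x y b n * u)
        = adIter x y b (n + 1) * u + b • (adIter x y b n * (y * u)) := by rw [e]; abel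
    simp only [mul_add, mul_smul_comm, Nat.cast_succ, e']
    module

lemma G_adIter_zero_mul (h : IsSkewPair U F G x y a b p) {u : A} (hu : u ∈ U) :
    G (adIter x y b 0 * u) = u + p • (adIter x y b 0 * G u) := h.G_x_mul u hu

lemma G_adIter_succ_mul (h : IsSkewPair U F G x y a b p) (n : ℕ) : ∀ u ∈ U,
    G (adIter x y b (n + 1) * u) = (b ^ (n + 1) * p) • (adIter x y b (n + 1) * G u) := by
  induction n with
  | zero =>
    intro u hu
    simp only [adIter, sub_mul, smul_mul_assoc, mul_assoc, map_sub, map_smul]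
    rw [h.G_y_mul _ (h.x_mul_mem u hu), h.G_x_mul _ (h.y_mul_mem u hu), h.G_x_mul u hu,
      h.G_y_mul u hu]
    simp only [mul_add, mul_smul_comm]
    module
  | succ n ih =>
    intro u hu
    rw [adIter]
    simp only [sub_mul, smul_mul_assoc, mul_assoc, map_sub, map_smul]
    rw [h.G_y_mul _ (h.adIter_mul_mem _ u hu), ih _ (h.y_mul_mem u hu), ih u hu, h.G_y_mul u hu]
    simp only [mul_smul_comm]
    module

/-- If `G F^t u = 0` for all `t ≤ s`, then `G F^s` kills `(ad y)^n x * u` for `n > s`,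
and sends `(ad y)^s x * u` to a nonzero multiple of `u`. -/
lemma G_F_pow_adIter_mul (h : IsSkewPair U F G x y a b p) (hab : a * b ≠ 1) (s : ℕ) :
    ∃ κ : ℂ, κ ≠ 0 ∧ ∀ u ∈ U, (∀ t ≤ s, G ((F ^ t) u) = 0) →
      (∀ n, s < n → G ((F ^ s) (adIter x y b n * u)) = 0) ∧
        G ((F ^ s) (adIter x y b s * u)) = κ • u := by
  induction s with
  | zero =>
    refine ⟨1, one_ne_zero, fun u hu h0 => ⟨fun n hn => ?_, ?_⟩⟩
    · obtain ⟨n, rfl⟩ : ∃ k, n = k + 1 := ⟨n - 1, by omega⟩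
      have := h0 0 le_rfl
      simp only [pow_zero, Module.End.one_apply] at this ⊢
      rw [h.G_adIter_succ_mul n u hu, this, mul_zero, smul_zero]
    · have := h0 0 le_rfl
      simp only [pow_zero, Module.End.one_apply] at this ⊢
      rw [h.G_adIter_zero_mul hu, this, mul_zero, smul_zero, add_zero, one_smul]
  | succ s ih =>
    obtain ⟨κ, hκ, ih⟩ := ih
    have hc : ((s : ℂ) + 1) * (1 - a * b) ≠ 0 :=
      mul_ne_zero (Nat.cast_add_one_ne_zero s) (sub_ne_zero.2 hab.symm)
    refine ⟨((s : ℂ) + 1) * (1 - a * b) * κ, mul_ne_zero hc hκ, fun u hu h0 => ?_⟩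
    have hFu := ih (F u) (h.F_mem u hu) fun t ht => by
      simpa [pow_succ] using h0 (t + 1) (by omega)
    have hu' := ih u hu fun t ht => h0 t (by omega)
    refine ⟨fun n hn => ?_, ?_⟩
    · obtain ⟨n, rfl⟩ : ∃ k, n = k + 1 := ⟨n - 1, by omega⟩
      rw [pow_succ, Module.End.mul_apply, h.F_adIter_succ_mul n u hu]
      simp only [map_add, map_smul]
      rw [hu'.1 n (by omega), hFu.1 (n + 1) (by omega), smul_zero, smul_zero, add_zero]
    · rw [pow_succ, Module.End.mul_apply, h.F_adIter_succ_mul s u hu]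
      simp only [map_add, map_smul]
      rw [hu'.2, hFu.1 (s + 1) (by omega), smul_zero, add_zero, smul_smul]

/-- The ordered products of distinct elements among `(ad y)^n x` with `m ≤ n < m + k` are
linearly independent modulo any proper subspace stable under `F` and `G`. -/
lemma exists_linearIndependent (h : IsSkewPair U F G x y a b p) (hab : a * b ≠ 1)
    {I : Submodule ℂ A} (hF : ∀ u ∈ I, F u ∈ I) (hG : ∀ u ∈ I, G u ∈ I) (h1 : (1 : A) ∉ I)
    {W : ℕ → Submodule ℂ A} (hW : Monotone W) (hW1 : 1 ∈ W 0)
    (hWmul : ∀ m n u v, u ∈ W m → v ∈ W n → u * v ∈ W (m + n)) {N : ℕ} (hx : x ∈ W N)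
    (hy : y ∈ W N) (k : ℕ) :
    ∀ m : ℕ, ∃ (ι : Type) (_ : Fintype ι) (s : ι → A), Fintype.card ι = 2 ^ k ∧
      (∀ r, s r ∈ U ∧ (∀ t < m, G ((F ^ t) (s r)) = 0) ∧ s r ∈ W (k * (m + k) * N)) ∧
      LinearIndependent ℂ (I.mkQ ∘ s) := by
  have hz : ∀ n, adIter x y b n ∈ W ((n + 1) * N) := by
    intro n
    induction n with
    | zero => simpa [adIter] using hx
    | succ n ih =>
      have e : (n + 1 + 1) * N = N + (n + 1) * N := by ring
      refine Submodule.sub_mem _ ?_ (Submodule.smul_mem _ _ ?_)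
      · rw [e]; exact hWmul _ _ _ _ hy ih
      · rw [e, add_comm]; exact hWmul _ _ _ _ ih hy
  have hFpow : ∀ t : ℕ, ∀ u ∈ I, (F ^ t) u ∈ I := by
    intro t
    induction t with
    | zero => intro u hu; simpa using hu
    | succ t ih =>
      intro u hu
      rw [pow_succ, Module.End.mul_apply]
      exact ih _ (hF u hu)
  induction k with
  | zero =>
    intro m
    refine ⟨Unit, inferInstance, fun _ => 1, by simp, fun _ => ⟨h.one_mem, fun t _ => ?_, ?_⟩, ?_⟩
    · cases t with
      | zero => simpa using h.G_one
      | succ t => rw [pow_succ, Module.End.mul_apply, h.F_one, map_zero, map_zero]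
    · simpa using hW1
    · rw [linearIndependent_unique_iff]
      simpa [Submodule.Quotient.mk_eq_zero] using h1
  | succ k ih =>
    intro m
    obtain ⟨ι, _, s, hcard, hs, hli⟩ := ih (m + 1)
    refine ⟨ι ⊕ ι, inferInstance, Sum.elim s fun r => adIter x y b m * s r, ?_, ?_, ?_⟩
    · rw [Fintype.card_sum, hcard]; ring
    · rintro (r | r)
      · obtain ⟨hU, h0, hr⟩ := hs r
        refine ⟨hU, fun t ht => h0 t (by omega), hW ?_ hr⟩
        exact Nat.mul_le_mul_right _ (Nat.mul_le_mul (by omega) (by omega))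
      · obtain ⟨hU, h0, hr⟩ := hs r
        refine ⟨h.adIter_mul_mem m _ hU, fun t ht => ?_, hW ?_ (hWmul _ _ _ _ (hz m) hr)⟩
        · obtain ⟨_, _, hκ⟩ := h.G_F_pow_adIter_mul hab t
          exact (hκ _ hU fun t' ht' => h0 t' (by omega)).1 m ht
        · rw [← add_mul]
          exact Nat.mul_le_mul_right _ (by nlinarith)
    · obtain ⟨κ, hκ0, hκ⟩ := h.G_F_pow_adIter_mul hab m
      rw [Fintype.linearIndependent_iff] at hli ⊢
      have hli' : ∀ c : ι → ℂ, ∑ r, c r • s r ∈ I → ∀ r, c r = 0 := fun c hc => hli c <| by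
        rw [← Submodule.Quotient.mk_eq_zero, ← Submodule.mkQ_apply, map_sum] at hc
        simpa using hc
      intro c hc
      have hc' : ∑ r, c (.inl r) • s r + ∑ r, c (.inr r) • (adIter x y b m * s r) ∈ I := by
        rw [← Submodule.Quotient.mk_eq_zero, ← Submodule.mkQ_apply, map_add, map_sum, map_sum]
        simpa using hc
      have hr0 : ∀ r, c (.inr r) = 0 := by
        have key := hG _ (hFpow m _ hc')
        simp only [map_add, map_sum, map_smul] at key
        rw [Finset.sum_eq_zero fun r _ => by rw [(hs r).2.1 m (by omega), smul_zero],
          zero_add] at key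
        have := hli' (fun r => c (.inr r) * κ) <| by
          convert key using 2 with r
          rw [(hκ _ (hs r).1 fun t ht => (hs r).2.1 t (by omega)).2, smul_smul]
        exact fun r => (mul_eq_zero.1 (this r)).resolve_right hκ0
      have hl0 := hli' (fun r => c (.inl r)) <| by simpa [hr0] using hc'
      rintro (r | r)
      exacts [hl0 r, hr0 r]

end IsSkewPair

section Words

variable {θ : ℕ}

lemma wordElem_nil : wordElem θ [] = 1 := rfl

lemma wordElem_cons (k : Fin θ) (w : List (Fin θ)) :
    wordElem θ (k :: w) = gen θ k * wordElem θ w := by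
  simp [wordElem]

lemma wordElem_singleton (k : Fin θ) : wordElem θ [k] = gen θ k := by
  simp [wordElem]

lemma wordElem_append (v w : List (Fin θ)) :
    wordElem θ (v ++ w) = wordElem θ v * wordElem θ w := by
  simp [wordElem]

lemma wordElem_replicate (n : ℕ) (k : Fin θ) :
    wordElem θ (List.replicate n k) = gen θ k ^ n := by
  simp [wordElem]

lemma basisFreeMonoid_ofList (w : List (Fin θ)) :
    FreeAlgebra.basisFreeMonoid ℂ (Fin θ) (FreeMonoid.ofList w) = wordElem θ w := by
  have h : FreeAlgebra.basisFreeMonoid ℂ (Fin θ) (FreeMonoid.ofList w)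
      = FreeAlgebra.equivMonoidAlgebraFreeMonoid.symm
        (MonoidAlgebra.of ℂ (FreeMonoid (Fin θ)) (FreeMonoid.ofList w)) := by
    simp [FreeAlgebra.basisFreeMonoid]
  rw [h]
  clear h
  induction w with
  | nil => rw [FreeMonoid.ofList_nil, map_one, map_one, wordElem_nil]
  | cons k w ih =>
    rw [FreeMonoid.ofList_cons, map_mul, map_mul, wordElem_cons]
    congr 1
    simp [FreeAlgebra.equivMonoidAlgebraFreeMonoid, gen]

/-- The linear map on `T(V)` with prescribed values on words. -/
def wordMap {M : Type*} [AddCommGroup M] [Module ℂ M] (φ : List (Fin θ) → M) : TV θ →ₗ[ℂ] M :=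
  (FreeAlgebra.basisFreeMonoid ℂ (Fin θ)).constr ℂ fun w => φ (FreeMonoid.toList w)

@[simp]
lemma wordMap_wordElem {M : Type*} [AddCommGroup M] [Module ℂ M] (φ : List (Fin θ) → M)
    (w : List (Fin θ)) : wordMap φ (wordElem θ w) = φ w := by
  rw [← basisFreeMonoid_ofList, wordMap, Module.Basis.constr_basis]
  rfl

lemma mem_span_wordElem (u : TV θ) : u ∈ Submodule.span ℂ (Set.range (wordElem θ)) := by
  have h := (FreeAlgebra.basisFreeMonoid ℂ (Fin θ)).mem_span u
  refine Submodule.span_mono ?_ h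
  rintro _ ⟨w, rfl⟩
  exact ⟨FreeMonoid.toList w, (basisFreeMonoid_ofList _).symm⟩

/-- The coordinate functional of a word. -/
def coord (w₀ : List (Fin θ)) : TV θ →ₗ[ℂ] ℂ := wordMap fun w => if w = w₀ then 1 else 0

lemma coord_wordElem (w₀ w : List (Fin θ)) :
    coord w₀ (wordElem θ w) = if w = w₀ then 1 else 0 := wordMap_wordElem _ _

/-- The projection of `T(V)` onto its component of total degree `n`. -/
def degProj (n : ℕ) : TV θ →ₗ[ℂ] TV θ :=
  wordMap fun w => if w.length = n then wordElem θ w else 0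

lemma degProj_wordElem (n : ℕ) (w : List (Fin θ)) :
    degProj n (wordElem θ w) = if w.length = n then wordElem θ w else 0 := wordMap_wordElem _ _

lemma degProj_of_mem_homogTot {m : ℕ} {u : TV θ} (hu : u ∈ homogTot θ m) (n : ℕ) :
    degProj n u = if m = n then u else 0 := by
  induction hu using Submodule.span_induction with
  | mem x hx =>
    obtain ⟨w, rfl, rfl⟩ := hx
    exact degProj_wordElem n w
  | zero => simp
  | add x y _ _ hx hy => rw [map_add, hx, hy]; split_ifs <;> simp
  | smul c x _ hx => rw [map_smul, hx]; split_ifs <;> simp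

lemma coord_of_mem_homogTot {m : ℕ} {u : TV θ} (hu : u ∈ homogTot θ m) {w₀ : List (Fin θ)}
    (hw : w₀.length ≠ m) : coord w₀ u = 0 := by
  induction hu using Submodule.span_induction with
  | mem x hx =>
    obtain ⟨w, rfl, rfl⟩ := hx
    rw [coord_wordElem, if_neg]
    rintro rfl
    exact hw rfl
  | zero => simp
  | add x y _ _ hx hy => rw [map_add, hx, hy, add_zero]
  | smul c x _ hx => rw [map_smul, hx, smul_zero]

lemma Wfil_mono : Monotone (Wfil θ) := fun _ _ h =>
  Submodule.span_mono fun _ ⟨w, hw, e⟩ => ⟨w, hw.trans h, e⟩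

lemma wordElem_mem_Wfil (w : List (Fin θ)) : wordElem θ w ∈ Wfil θ w.length :=
  Submodule.subset_span ⟨w, le_rfl, rfl⟩

lemma mul_mem_Wfil (m n : ℕ) (u v : TV θ) (hu : u ∈ Wfil θ m) (hv : v ∈ Wfil θ n) :
    u * v ∈ Wfil θ (m + n) := by
  have h : Wfil θ m * Wfil θ n ≤ Wfil θ (m + n) := by
    rw [Wfil, Wfil, Submodule.span_mul_span, Submodule.span_le]
    rintro _ ⟨_, ⟨v, hv, rfl⟩, _, ⟨w, hw, rfl⟩, rfl⟩
    refine Submodule.subset_span ⟨v ++ w, ?_, (wordElem_append v w).symm⟩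
    rw [List.length_append]
    exact Nat.add_le_add hv hw
  exact h (Submodule.mul_mem_mul hu hv)

instance (n : ℕ) : FiniteDimensional ℂ (Wfil θ n) := by
  refine FiniteDimensional.span_of_finite ℂ
    (((List.finite_length_le (Fin θ) n).image (wordElem θ)).subset ?_)
  rintro _ ⟨w, hw, rfl⟩
  exact ⟨w, hw, rfl⟩

lemma degW_nil : degW θ [] = 0 := by
  funext k
  simp [degW]

lemma degW_replicate (n : ℕ) (k : Fin θ) : degW θ (List.replicate n k) = Pi.single k n := by
  funext l
  rw [degW, List.count_replicate, Pi.single_apply]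
  simp only [beq_iff_eq, eq_comm (a := k)]

lemma degW_singleton (k : Fin θ) : degW θ [k] = Pi.single k 1 := degW_replicate 1 k

lemma qf_single (q : Fin θ → Fin θ → ℂˣ) (k l : Fin θ) (m n : ℕ) :
    qf q (Pi.single k m) (Pi.single l n) = (q k l : ℂ) ^ (m * n) := by
  rw [qf, Finset.prod_eq_single k, Finset.prod_eq_single l]
  · simp
  · intro b _ hb; simp [hb]
  · simp
  · intro b _ hb; simp [hb]
  · simp

lemma qf_zero_left (q : Fin θ → Fin θ → ℂˣ) (b : Fin θ → ℕ) : qf q 0 b = 1 := by simp [qf]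

lemma qf_zero_right (q : Fin θ → Fin θ → ℂˣ) (a : Fin θ → ℕ) : qf q a 0 = 1 := by simp [qf]

end Words

section Contraction

variable {θ : ℕ} {q : Fin θ → Fin θ → ℂˣ}

/-- The map `(h ⊗ id) ∘ Δ` on `T(V)`. -/
def contract (S : BraidedStr θ q) (h : TV θ →ₗ[ℂ] ℂ) : TV θ →ₗ[ℂ] TV θ :=
  (TensorProduct.lid ℂ (TV θ)).toLinearMap ∘ₗ h.rTensor (TV θ) ∘ₗ S.Δ

lemma contract_one (S : BraidedStr θ q) (h : TV θ →ₗ[ℂ] ℂ) : contract S h 1 = h 1 • 1 := by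
  simp [contract, S.Δ_one]

lemma contract_mem (S : BraidedStr θ q) {I : Submodule ℂ (TV θ)} (hI : IsPreNicholsIdeal S I)
    {h : TV θ →ₗ[ℂ] ℂ} (hh : ∀ u ∈ I, h u = 0) {u : TV θ} (hu : u ∈ I) : contract S h u ∈ I := by
  have key : ∀ t ∈ mixedSub I, TensorProduct.lid ℂ (TV θ) (h.rTensor (TV θ) t) ∈ I := by
    intro t ht
    induction ht using Submodule.span_induction with
    | mem x hx =>
      rcases hx with ⟨a, b, ha, rfl⟩ | ⟨a, b, hb, rfl⟩
      · simp [hh a ha]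
      · simpa using I.smul_mem _ hb
    | zero => simp
    | add x y _ _ hx hy => simpa using I.add_mem hx hy
    | smul c x _ hx => simpa using I.smul_mem c hx
  exact key _ (hI.coideal u hu)

/-- The span of the tensors `w ⊗ t` with `w` a word in the set `Ws`. -/
def leftSpan (Ws : Set (List (Fin θ))) : Submodule ℂ (TV θ ⊗[ℂ] TV θ) :=
  Submodule.span ℂ {x | ∃ w ∈ Ws, ∃ t : TV θ, x = wordElem θ w ⊗ₜ[ℂ] t}

lemma leftSpan_univ : leftSpan (Set.univ : Set (List (Fin θ))) = ⊤ := by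
  rw [eq_top_iff, ← TensorProduct.span_tmul_eq_top, Submodule.span_le]
  rintro _ ⟨a, b, rfl⟩
  induction mem_span_wordElem a using Submodule.span_induction with
  | mem x hx =>
    obtain ⟨w, rfl⟩ := hx
    exact Submodule.subset_span ⟨w, trivial, b, rfl⟩
  | zero => simp
  | add x y _ _ hx hy => rw [TensorProduct.add_tmul]; exact Submodule.add_mem _ hx hy
  | smul c x _ hx => rw [← TensorProduct.smul_tmul']; exact Submodule.smul_mem _ c hx

lemma mulB_tmul_one (S : BraidedStr θ q) (a d : TV θ) (w : List (Fin θ)) :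
    S.mulB (a ⊗ₜ[ℂ] 1) (wordElem θ w ⊗ₜ[ℂ] d) = (a * wordElem θ w) ⊗ₜ[ℂ] d := by
  have h := S.mulB_spec a d [] w
  rwa [wordElem_nil, degW_nil, qf_zero_left, one_smul, one_mul] at h

lemma mulB_one_tmul (S : BraidedStr θ q) (d : TV θ) (v w : List (Fin θ)) :
    S.mulB (1 ⊗ₜ[ℂ] wordElem θ v) (wordElem θ w ⊗ₜ[ℂ] d)
      = qf q (degW θ v) (degW θ w) • (wordElem θ w ⊗ₜ[ℂ] (wordElem θ v * d)) := by
  rw [S.mulB_spec, one_mul]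

/-- The skew Leibniz rule for the left multiplication by a primitive word. -/
lemma contract_wordElem_mul_aux (S : BraidedStr θ q) {v : List (Fin θ)}
    (hv : IsPrimitiveIn S (wordElem θ v)) {Ws : Set (List (Fin θ))} {u : TV θ}
    (hu : S.Δ u ∈ leftSpan Ws) {h : TV θ →ₗ[ℂ] ℂ} {α χ : ℂ}
    (hα : ∀ w ∈ Ws, h (wordElem θ v * wordElem θ w) = α * coord [] (wordElem θ w))
    (hχ : ∀ w ∈ Ws, qf q (degW θ v) (degW θ w) * h (wordElem θ w) = χ * h (wordElem θ w)) :
    contract S h (wordElem θ v * u)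
      = α • contract S (coord []) u + χ • (wordElem θ v * contract S h u) := by
  simp only [contract, LinearMap.comp_apply, LinearEquiv.coe_coe]
  rw [S.Δ_mul, hv]
  generalize S.Δ u = T at hu ⊢
  induction hu using Submodule.span_induction with
  | mem x hx =>
    obtain ⟨w, hw, t, rfl⟩ := hx
    rw [map_add, LinearMap.add_apply, mulB_tmul_one, mulB_one_tmul]
    simp only [map_add, map_smul, LinearMap.rTensor_tmul, TensorProduct.lid_tmul, hα w hw,
      mul_smul_comm, smul_smul, hχ w hw]
  | zero => simp
  | add x y _ _ hx hy =>
    simp only [map_add, mul_add, smul_add] at hx hy ⊢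
    rw [hx, hy]
    abel
  | smul c x _ hx =>
    simp only [map_smul, mul_smul_comm] at hx ⊢
    rw [hx, smul_add, smul_comm c α, smul_comm c χ]

lemma isPrimitiveIn_wordElem_singleton (S : BraidedStr θ q) (k : Fin θ) :
    IsPrimitiveIn S (wordElem θ [k]) := by
  rw [wordElem_singleton]
  exact S.Δ_gen k

lemma contract_counit (S : BraidedStr θ q) (u : TV θ) : contract S (coord []) u = u := by
  induction mem_span_wordElem u using Submodule.span_induction with
  | mem x hx =>
    obtain ⟨w, rfl⟩ := hx
    induction w with
    | nil => rw [wordElem_nil, contract_one, ← wordElem_nil, coord_wordElem]; simp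
    | cons k w ih =>
      rw [wordElem_cons, ← wordElem_singleton,
        contract_wordElem_mul_aux S (isPrimitiveIn_wordElem_singleton S k) (Ws := Set.univ)
          (α := 0) (χ := 1), ih]
      · simp
      · rw [leftSpan_univ]; trivial
      · intro w' _
        rw [← wordElem_append, coord_wordElem]
        simp
      · intro w' _
        rw [coord_wordElem]
        split_ifs with h
        · rw [h, degW_nil, qf_zero_right]
        · simp
  | zero => simp
  | add x y _ _ hx hy => rw [map_add, hx, hy]
  | smul c x _ hx => rw [map_smul, hx]

lemma contract_wordElem_mul (S : BraidedStr θ q) {v : List (Fin θ)}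
    (hv : IsPrimitiveIn S (wordElem θ v)) {Ws : Set (List (Fin θ))} {u : TV θ}
    (hu : S.Δ u ∈ leftSpan Ws) {h : TV θ →ₗ[ℂ] ℂ} {α χ : ℂ}
    (hα : ∀ w ∈ Ws, h (wordElem θ v * wordElem θ w) = α * coord [] (wordElem θ w))
    (hχ : ∀ w ∈ Ws, qf q (degW θ v) (degW θ w) * h (wordElem θ w) = χ * h (wordElem θ w)) :
    contract S h (wordElem θ v * u) = α • u + χ • (wordElem θ v * contract S h u) := by
  rw [contract_wordElem_mul_aux S hv hu hα hχ, contract_counit]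

/-- The skew derivation of `T(V)` dual to `x_l`. -/
def skewDer (S : BraidedStr θ q) (l : Fin θ) : TV θ →ₗ[ℂ] TV θ := contract S (coord [l])

lemma skewDer_one (S : BraidedStr θ q) (l : Fin θ) : skewDer S l 1 = 0 := by
  rw [skewDer, contract_one, ← wordElem_nil, coord_wordElem]
  simp

lemma skewDer_gen_mul (S : BraidedStr θ q) (l k : Fin θ) (u : TV θ) :
    skewDer S l (gen θ k * u)
      = (if k = l then (1 : ℂ) else 0) • u + (q k l : ℂ) • (gen θ k * skewDer S l u) := by
  rw [← wordElem_singleton]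
  refine contract_wordElem_mul S (isPrimitiveIn_wordElem_singleton S k) (Ws := Set.univ) ?_ ?_ ?_
  · rw [leftSpan_univ]; trivial
  · intro w _
    rw [← wordElem_append, coord_wordElem, coord_wordElem]
    by_cases hk : k = l <;> simp [hk]
  · intro w _
    rw [coord_wordElem]
    split_ifs with h
    · rw [h, degW_singleton, degW_singleton, qf_single]; simp
    · simp

lemma skewDer_gen_self_pow (S : BraidedStr θ q) (k : Fin θ) (n : ℕ) :
    skewDer S k (gen θ k ^ (n + 1)) = qnum (q k k) (n + 1) • gen θ k ^ n := by
  induction n with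
  | zero =>
    rw [zero_add, pow_one, ← mul_one (gen θ k), skewDer_gen_mul, skewDer_one]
    simp [qnum]
  | succ n ih =>
    rw [pow_succ', skewDer_gen_mul, ih, mul_smul_comm, ← pow_succ', smul_smul, ← add_smul]
    congr 1
    simp only [qnum, if_true]
    rw [Finset.sum_range_succ' _ (n + 1), Finset.mul_sum, add_comm]
    simp [pow_succ']

lemma skewDer_gen_pow_mul_of_ne (S : BraidedStr θ q) {k l : Fin θ} (hkl : k ≠ l) (n : ℕ)
    (u : TV θ) :
    skewDer S l (gen θ k ^ n * u) = (q k l : ℂ) ^ n • (gen θ k ^ n * skewDer S l u) := by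
  induction n with
  | zero => simp
  | succ n ih =>
    rw [pow_succ', mul_assoc, skewDer_gen_mul, ih, if_neg hkl, zero_smul, zero_add,
      mul_smul_comm, smul_smul, ← pow_succ', mul_assoc]

end Contraction

section PrimitivePower

/-- The Gaussian binomial coefficient `binom(k + l, k)_t`. -/
def gaussBinom (t : ℂ) : ℕ → ℕ → ℂ
  | 0, _ => 1
  | _ + 1, 0 => 1
  | k + 1, l + 1 => gaussBinom t k (l + 1) + t ^ (k + 1) * gaussBinom t (k + 1) l

lemma gaussBinom_zero_right (t : ℂ) (k : ℕ) : gaussBinom t k 0 = 1 := by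
  cases k <;> simp [gaussBinom]

/-- The quantum factorial `(n)_t!`. -/
def qfact (t : ℂ) (n : ℕ) : ℂ := ∏ m ∈ Finset.range n, qnum t (m + 1)

lemma qfact_succ (t : ℂ) (n : ℕ) : qfact t (n + 1) = qfact t n * qnum t (n + 1) :=
  Finset.prod_range_succ _ _

lemma qnum_add (t : ℂ) (m n : ℕ) : qnum t (m + n) = qnum t m + t ^ m * qnum t n := by
  simp [qnum, Finset.sum_range_add, Finset.mul_sum, pow_add]

lemma gaussBinom_mul_qfact (t : ℂ) (k l : ℕ) :
    gaussBinom t k l * (qfact t k * qfact t l) = qfact t (k + l) := by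
  induction k generalizing l with
  | zero => simp [gaussBinom, qfact]
  | succ k ihk =>
    induction l with
    | zero => simp [gaussBinom, qfact]
    | succ l ihl =>
      have h1 := ihk (l + 1)
      have e : k + 1 + (l + 1) = k + (l + 1) + 1 := by ring
      have e' : k + 1 + l = k + (l + 1) := by ring
      rw [e'] at ihl
      rw [gaussBinom, e, qfact_succ t (k + (l + 1)), ← e, qnum_add t (k + 1) (l + 1)]
      rw [qfact_succ t k, qfact_succ t l] at *
      linear_combination qnum t (k + 1) * h1 + t ^ (k + 1) * qnum t (l + 1) * ihl

lemma mul_qnum (t : ℂ) (n : ℕ) : (t - 1) * qnum t n = t ^ n - 1 := mul_geom_sum t n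

lemma qnum_eq_zero_iff {t : ℂ} (ht : t ≠ 1) (n : ℕ) : qnum t n = 0 ↔ t ^ n = 1 := by
  rw [← sub_eq_zero (a := t ^ n), ← mul_qnum, mul_eq_zero, or_iff_right (sub_ne_zero.2 ht)]

lemma qfact_ne_zero {t : ℂ} {n : ℕ} (h : ∀ m, 0 < m → m ≤ n → qnum t m ≠ 0) :
    qfact t n ≠ 0 :=
  Finset.prod_ne_zero_iff.2 fun m hm => h _ m.succ_pos (Finset.mem_range.1 hm)

lemma gaussBinom_eq_zero {t : ℂ} {k l : ℕ} (ht : IsPrimitiveRoot t (k + 1 + (l + 1))) :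
    gaussBinom t (k + 1) (l + 1) = 0 := by
  have ht1 : t ≠ 1 := ht.ne_one (by omega)
  have hne : ∀ m, 0 < m → m < k + 1 + (l + 1) → qnum t m ≠ 0 := fun m hm hlt h0 =>
    ht.pow_ne_one_of_pos_of_lt hm.ne' hlt ((qnum_eq_zero_iff ht1 m).1 h0)
  have h0 : qfact t (k + 1 + (l + 1)) = 0 := by
    rw [← add_assoc, qfact_succ, add_assoc (k + 1), (qnum_eq_zero_iff ht1 _).2 ht.pow_eq_one, mul_zero]
  have h := gaussBinom_mul_qfact t (k + 1) (l + 1)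
  rw [h0] at h
  exact (mul_eq_zero.1 h).resolve_right <| mul_ne_zero
    (qfact_ne_zero fun m hm hle => hne m hm (by omega))
    (qfact_ne_zero fun m hm hle => hne m hm (by omega))

variable {θ : ℕ} {q : Fin θ → Fin θ → ℂˣ}

lemma Δ_gen_pow (S : BraidedStr θ q) (i : Fin θ) (n : ℕ) :
    S.Δ (gen θ i ^ n) = ∑ kl ∈ Finset.HasAntidiagonal.antidiagonal n,
      gaussBinom (q i i) kl.1 kl.2 • ((gen θ i ^ kl.1) ⊗ₜ[ℂ] (gen θ i ^ kl.2)) := by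
  induction n with
  | zero => simp [S.Δ_one, gaussBinom]
  | succ n ih =>
    have hstep : ∀ k l : ℕ, S.mulB (S.Δ (gen θ i)) ((gen θ i ^ k) ⊗ₜ[ℂ] (gen θ i ^ l))
        = (gen θ i ^ (k + 1)) ⊗ₜ[ℂ] (gen θ i ^ l)
          + (q i i : ℂ) ^ k • ((gen θ i ^ k) ⊗ₜ[ℂ] (gen θ i ^ (l + 1))) := by
      intro k l
      have h1 := mulB_tmul_one S (gen θ i) (gen θ i ^ l) (List.replicate k i)
      have h2 := mulB_one_tmul S (gen θ i ^ l) [i] (List.replicate k i)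
      rw [wordElem_replicate] at h1
      rw [wordElem_replicate, wordElem_singleton, degW_singleton, degW_replicate, qf_single,
        one_mul] at h2
      rw [S.Δ_gen, map_add, LinearMap.add_apply, h1, h2, ← pow_succ', ← pow_succ']
    have hsplit : ∀ kl ∈ Finset.HasAntidiagonal.antidiagonal (n + 1),
        gaussBinom (q i i) kl.1 kl.2 = (if kl.1 = 0 then 0 else gaussBinom (q i i) (kl.1 - 1) kl.2)
          + if kl.2 = 0 then 0 else (q i i : ℂ) ^ kl.1 * gaussBinom (q i i) kl.1 (kl.2 - 1) := by
      rintro ⟨k, l⟩ hkl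
      rw [Finset.HasAntidiagonal.mem_antidiagonal] at hkl
      cases k <;> cases l <;> simp_all [gaussBinom, gaussBinom_zero_right]
    have hsum := Finset.sum_congr rfl fun kl hkl => congrArg
      (· • ((gen θ i ^ kl.1) ⊗ₜ[ℂ] (gen θ i ^ kl.2))) (hsplit kl hkl)
    simp only [add_smul, Finset.sum_add_distrib] at hsum
    rw [pow_succ', S.Δ_mul, ih, map_sum, hsum,
      Finset.Nat.sum_antidiagonal_succ, Finset.Nat.sum_antidiagonal_succ' (n := n)]
    simp only [map_smul, hstep, smul_add, smul_smul, Finset.sum_add_distrib]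
    simp [mul_comm]

lemma isPrimitiveIn_gen_pow (S : BraidedStr θ q) {i : Fin θ} {N : ℕ} (hN : 2 ≤ N)
    (hq : IsPrimitiveRoot (q i i : ℂ) N) : IsPrimitiveIn S (gen θ i ^ N) := by
  obtain ⟨n, rfl⟩ : ∃ n, N = n + 1 + 1 := ⟨N - 2, by omega⟩
  rw [IsPrimitiveIn, Δ_gen_pow, Finset.Nat.sum_antidiagonal_succ,
    Finset.Nat.sum_antidiagonal_succ', Finset.sum_eq_zero]
  · simp [gaussBinom, gaussBinom_zero_right, add_comm]
  · rintro ⟨k, l⟩ hkl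
    rw [Finset.HasAntidiagonal.mem_antidiagonal] at hkl
    dsimp only at hkl ⊢
    rw [gaussBinom_eq_zero, zero_smul]
    convert hq using 1
    omega

end PrimitivePower

section PreNicholsIdeals

variable {θ : ℕ} {q : Fin θ → Fin θ → ℂˣ} {S : BraidedStr θ q} {I : Submodule ℂ (TV θ)}

lemma IsPreNicholsIdeal.coord_eq_zero (hI : IsPreNicholsIdeal S I) {w : List (Fin θ)}
    (hw : w.length < 2) {u : TV θ} (hu : u ∈ I) : coord w u = 0 := by
  suffices I ≤ LinearMap.ker (coord w) from this hu
  rw [hI.homog_ge2, Submodule.span_le]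
  rintro x ⟨-, n, hn, hx⟩
  exact coord_of_mem_homogTot hx (by omega)

lemma IsPreNicholsIdeal.one_notMem (hI : IsPreNicholsIdeal S I) : (1 : TV θ) ∉ I := fun h => by
  have := hI.coord_eq_zero (w := []) (by simp) h
  rw [← wordElem_nil, coord_wordElem] at this
  simp at this

lemma IsPreNicholsIdeal.degProj_mem (hI : IsPreNicholsIdeal S I) (n : ℕ) {u : TV θ}
    (hu : u ∈ I) : degProj n u ∈ I := by
  suffices I ≤ I.comap (degProj n) from this hu
  conv_lhs => rw [hI.homog_ge2]
  rw [Submodule.span_le]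
  rintro x ⟨hxI, m, -, hx⟩
  change degProj n x ∈ I
  rw [degProj_of_mem_homogTot hx]
  split_ifs
  exacts [hxI, I.zero_mem]

lemma IsPreNicholsIdeal.skewDer_mem (hI : IsPreNicholsIdeal S I) (l : Fin θ) {u : TV θ}
    (hu : u ∈ I) : skewDer S l u ∈ I :=
  contract_mem S hI (fun _ hv => hI.coord_eq_zero (by simp) hv) hu

lemma skewDer_mem_Jq (S : BraidedStr θ q) (l : Fin θ) {u : TV θ} (hu : u ∈ Jq S) :
    skewDer S l u ∈ Jq S := by
  suffices Jq S ≤ (Jq S).comap (skewDer S l) from this hu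
  refine sSup_le fun I hI v hv => ?_
  exact (le_sSup hI : I ≤ Jq S) (IsPreNicholsIdeal.skewDer_mem hI l hv)

lemma one_notMem_Jq (S : BraidedStr θ q) : (1 : TV θ) ∉ Jq S := fun h => by
  have hle : Jq S ≤ LinearMap.ker (coord []) :=
    sSup_le fun I hI v hv => IsPreNicholsIdeal.coord_eq_zero hI (by simp) hv
  have h1 : coord (θ := θ) [] 1 = 0 := hle h
  rw [← wordElem_nil, coord_wordElem] at h1
  simp at h1

/-- If no quantum number `(n)_{q_ii}` vanishes, then the powers of `x_i` are linearly
independent in the Nichols algebra. -/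
lemma linearIndependent_gen_pow (S : BraidedStr θ q) (i : Fin θ)
    (h : ∀ n, 0 < n → qnum (q i i) n ≠ 0) (n : ℕ) :
    LinearIndependent ℂ fun k : Fin n => (Jq S).mkQ (gen θ i ^ (k : ℕ)) := by
  have hpow : ∀ m k : ℕ, ((skewDer S i) ^ m) (gen θ i ^ (k + m))
      = (∏ r ∈ Finset.range m, qnum (q i i) (k + r + 1)) • gen θ i ^ k := by
    intro m k
    induction m with
    | zero => simp
    | succ m ih =>
      rw [pow_succ, Module.End.mul_apply, ← add_assoc, skewDer_gen_self_pow, map_smul, ih,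
        smul_smul, Finset.prod_range_succ, mul_comm]
  have hlow : ∀ k m : ℕ, k < m → ((skewDer S i) ^ m) (gen θ i ^ k) = 0 := by
    intro k m hkm
    obtain ⟨r, rfl⟩ : ∃ r, m = r + 1 + k := ⟨m - k - 1, by omega⟩
    have e := hpow k 0
    rw [zero_add, pow_zero] at e
    rw [pow_add, Module.End.mul_apply, e, map_smul, pow_succ, Module.End.mul_apply, skewDer_one,
      map_zero, smul_zero]
  have hJ : ∀ m : ℕ, ∀ u ∈ Jq S, ((skewDer S i) ^ m) u ∈ Jq S := by
    intro m
    induction m with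
    | zero => intro u hu; simpa using hu
    | succ m ih =>
      intro u hu
      rw [pow_succ, Module.End.mul_apply]
      exact ih _ (skewDer_mem_Jq S i hu)
  induction n with
  | zero => exact linearIndependent_empty_type
  | succ n ih =>
    rw [linearIndependent_finSucc']
    refine ⟨ih, fun hmem => ?_⟩
    have hle : Submodule.span ℂ (Set.range (Fin.init fun k : Fin (n + 1) =>
        (Jq S).mkQ (gen θ i ^ (k : ℕ)))) ≤
          ((Jq S).comap ((skewDer S i) ^ n)).map (Jq S).mkQ := by
      rw [Submodule.span_le]
      rintro _ ⟨k, rfl⟩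
      refine ⟨gen θ i ^ (k : ℕ), ?_, rfl⟩
      change ((skewDer S i) ^ n) _ ∈ Jq S
      rw [hlow _ _ k.2]
      exact Submodule.zero_mem _
    obtain ⟨u, hu, hue⟩ := hle hmem
    have hd : gen θ i ^ n - u ∈ Jq S := (Submodule.Quotient.eq _).1 hue.symm
    have h2 := (Jq S).add_mem (hJ n _ hd) hu
    have h3 := hpow n 0
    rw [zero_add, pow_zero] at h3
    rw [map_sub, sub_add_cancel, h3] at h2
    refine one_notMem_Jq S (((Jq S).smul_mem_iff ?_).1 h2)
    exact Finset.prod_ne_zero_iff.2 fun r _ => h _ (Nat.succ_pos _)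

lemma two_le_orderOf (S : BraidedStr θ q) [FiniteDimensional ℂ (TV θ ⧸ Jq S)] (i : Fin θ) :
    2 ≤ orderOf (q i i) := by
  obtain ⟨n, hn, h0⟩ : ∃ n, 0 < n ∧ qnum (q i i) n = 0 := by
    by_contra! h
    have := (linearIndependent_gen_pow S i h
      (Module.finrank ℂ (TV θ ⧸ Jq S) + 1)).fintype_card_le_finrank
    simp at this
  have hne : q i i ≠ 1 := by
    intro h1
    rw [h1] at h0
    simp only [qnum, Units.val_one, one_pow, Finset.sum_const, Finset.card_range, nsmul_eq_mul,
      mul_one, Nat.cast_eq_zero] at h0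
    omega
  have hpow : q i i ^ n = 1 := by
    rw [Units.ext_iff, Units.val_pow_eq_pow_val, Units.val_one]
    exact (qnum_eq_zero_iff (fun h => hne (Units.ext h)) n).1 h0
  have hpos := orderOf_pos_iff.2 (isOfFinOrder_iff_pow_eq_one.2 ⟨n, hn, hpow⟩)
  have := mt orderOf_eq_one_iff.1 hne
  omega

/-- A pre-Nichols ideal not containing `x_i^N` contains no `x_i^N - c x_j^N`, unless
`q̃_{ij}^N = 1`. -/
lemma IsPreNicholsIdeal.gen_pow_sub_notMem (hI : IsPreNicholsIdeal S I) {i j : Fin θ}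
    (hij : i ≠ j) {N : ℕ} (hN : 2 ≤ N) (hq : IsPrimitiveRoot (q i i : ℂ) N)
    (hab : (q j i : ℂ) ^ N * (q i j : ℂ) ^ N ≠ 1) (hy : gen θ i ^ N ∉ I) (c : ℂ) :
    gen θ i ^ N - c • gen θ j ^ N ∉ I := by
  intro hz
  have hc : c • gen θ j ^ N ∉ I := fun h => hy (by simpa using I.add_mem hz h)
  obtain ⟨n, rfl⟩ : ∃ n, N = n + 1 := ⟨N - 1, by omega⟩
  have hp : qnum (q j j) (n + 1) = 0 := by
    by_contra hne
    have h1 := hI.skewDer_mem j hz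
    rw [map_sub, map_smul, skewDer_gen_self_pow, ← mul_one (gen θ i ^ (n + 1)),
      skewDer_gen_pow_mul_of_ne S hij, skewDer_one, mul_zero, smul_zero, zero_sub,
      I.neg_mem_iff, smul_comm, I.smul_mem_iff hne] at h1
    refine hc ?_
    rw [pow_succ', ← mul_smul_comm]
    exact hI.mul_left _ _ h1
  have hb : (q i j : ℂ) ^ (n + 1) = 1 := by
    by_contra hne
    have h1 := hI.skewDer_mem j (hI.mul_right (gen θ j) _ hz)
    have hgj : skewDer S j (gen θ j) = 1 := by
      simpa [qnum] using skewDer_gen_self_pow S j 0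
    have hpn : qnum (q j j) (n + 1 + 1) = 1 := by
      rw [qnum_add, hp]
      have := mul_qnum (q j j : ℂ) (n + 1)
      rw [hp, mul_zero, eq_comm, sub_eq_zero] at this
      simp [this, qnum]
    rw [sub_mul, map_sub, smul_mul_assoc, map_smul, ← pow_succ, skewDer_gen_self_pow,
      skewDer_gen_pow_mul_of_ne S hij, hgj, mul_one, hpn, one_smul] at h1
    have h2 := I.sub_mem h1 hz
    rw [sub_sub_sub_cancel_right, ← one_smul ℂ (gen θ i ^ (n + 1)), smul_smul, mul_one,
      ← sub_smul, I.smul_mem_iff (sub_ne_zero.2 hne)] at h2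
    exact hy h2
  have ha : (q j i : ℂ) ^ (n + 1) = 1 := by
    by_contra hne
    have h1 := hI.skewDer_mem i (hI.mul_right (gen θ i) _ hz)
    have hgi : skewDer S i (gen θ i) = 1 := by
      simpa [qnum] using skewDer_gen_self_pow S i 0
    have hpn : qnum (q i i) (n + 1 + 1) = 1 := by
      rw [qnum_add, (qnum_eq_zero_iff (hq.ne_one (by omega)) _).2 hq.pow_eq_one, hq.pow_eq_one]
      simp [qnum]
    rw [sub_mul, map_sub, smul_mul_assoc, map_smul, ← pow_succ, skewDer_gen_self_pow,
      skewDer_gen_pow_mul_of_ne S hij.symm, hgi, mul_one, hpn, one_smul, smul_comm] at h1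
    have h2 := I.sub_mem hz h1
    rw [sub_sub_sub_cancel_left, ← one_smul ℂ (c • gen θ j ^ (n + 1)), smul_smul, mul_one,
      ← sub_smul, I.smul_mem_iff (sub_ne_zero.2 hne)] at h2
    exact hc h2
  exact hab (by rw [ha, hb, one_mul])

end PreNicholsIdeals

section Blocks

variable {θ : ℕ} {q : Fin θ → Fin θ → ℂˣ}

/-- The word in the `x`'s obtained from a word in two letters by substituting `x_i^N` and `x_j`. -/
def blockWord (N : ℕ) (i j : Fin θ) : List Bool → List (Fin θ)
  | [] => []
  | true :: l => List.replicate N i ++ blockWord N i j l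
  | false :: l => j :: blockWord N i j l

lemma blockWord_eq_nil_iff {N : ℕ} (hN : 2 ≤ N) (i j : Fin θ) (l : List Bool) :
    blockWord N i j l = [] ↔ l = [] := by
  rcases l with _ | ⟨_ | _, l⟩ <;> simp [blockWord]
  omega

lemma eq_of_length_blockWord {N : ℕ} (hN : 2 ≤ N) (i j : Fin θ) (l : List Bool) :
    (∃ n, blockWord N i j l = List.replicate n j) ∨ l = [true] ∨
      N < (blockWord N i j l).length := by
  induction l with
  | nil => exact .inl ⟨0, rfl⟩
  | cons s l ih =>
    rcases s with _ | _
    · rcases ih with ⟨n, hn⟩ | rfl | h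
      · exact .inl ⟨n + 1, by rw [blockWord, hn, List.replicate_succ]⟩
      · simp [blockWord]
      · right; right
        rw [blockWord, List.length_cons]
        omega
    · by_cases hl : l = []
      · simp [hl]
      · right; right
        have := List.length_pos_of_ne_nil (mt (blockWord_eq_nil_iff hN i j l).1 hl)
        simp only [blockWord, List.length_append, List.length_replicate]
        omega

/-- The subspace spanned by the words in `x_i^N` and `x_j`. -/
def blockSpan (N : ℕ) (i j : Fin θ) : Submodule ℂ (TV θ) :=
  Submodule.span ℂ (Set.range fun l => wordElem θ (blockWord N i j l))

lemma wordElem_blockWord_mem (N : ℕ) (i j : Fin θ) (l : List Bool) :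
    wordElem θ (blockWord N i j l) ∈ blockSpan N i j := Submodule.subset_span ⟨l, rfl⟩

lemma gen_pow_mul_blockWord (N : ℕ) (i j : Fin θ) (l : List Bool) :
    gen θ i ^ N * wordElem θ (blockWord N i j l) = wordElem θ (blockWord N i j (true :: l)) := by
  rw [blockWord, wordElem_append, wordElem_replicate]

lemma gen_mul_blockWord (N : ℕ) (i j : Fin θ) (l : List Bool) :
    gen θ j * wordElem θ (blockWord N i j l) = wordElem θ (blockWord N i j (false :: l)) := by
  rw [blockWord, wordElem_cons]

lemma gen_pow_mul_mem_blockSpan (N : ℕ) (i j : Fin θ) {u : TV θ} (hu : u ∈ blockSpan N i j) :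
    gen θ i ^ N * u ∈ blockSpan N i j := by
  suffices blockSpan N i j ≤ (blockSpan N i j).comap (LinearMap.mulLeft ℂ (gen θ i ^ N)) from
    this hu
  refine Submodule.span_le.2 ?_
  rintro _ ⟨l, rfl⟩
  change gen θ i ^ N * wordElem θ (blockWord N i j l) ∈ blockSpan N i j
  rw [gen_pow_mul_blockWord]
  exact wordElem_blockWord_mem N i j _

lemma gen_mul_mem_blockSpan (N : ℕ) (i j : Fin θ) {u : TV θ} (hu : u ∈ blockSpan N i j) :
    gen θ j * u ∈ blockSpan N i j := by
  suffices blockSpan N i j ≤ (blockSpan N i j).comap (LinearMap.mulLeft ℂ (gen θ j)) from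
    this hu
  refine Submodule.span_le.2 ?_
  rintro _ ⟨l, rfl⟩
  change gen θ j * wordElem θ (blockWord N i j l) ∈ blockSpan N i j
  rw [gen_mul_blockWord]
  exact wordElem_blockWord_mem N i j _

/-- Left multiplication by a primitive word preserves the left coideal condition. -/
lemma Δ_wordElem_mul_mem_leftSpan (S : BraidedStr θ q) {v : List (Fin θ)}
    (hv : IsPrimitiveIn S (wordElem θ v)) {Ws : Set (List (Fin θ))}
    (hWs : ∀ w ∈ Ws, v ++ w ∈ Ws) {u : TV θ} (hu : S.Δ u ∈ leftSpan Ws) :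
    S.Δ (wordElem θ v * u) ∈ leftSpan Ws := by
  rw [S.Δ_mul, hv]
  generalize S.Δ u = T at hu ⊢
  induction hu using Submodule.span_induction with
  | mem x hx =>
    obtain ⟨w, hw, t, rfl⟩ := hx
    rw [map_add, LinearMap.add_apply, mulB_tmul_one, mulB_one_tmul, ← wordElem_append]
    exact Submodule.add_mem _ (Submodule.subset_span ⟨_, hWs w hw, _, rfl⟩)
      (Submodule.smul_mem _ _ (Submodule.subset_span ⟨w, hw, _, rfl⟩))
  | zero => simp
  | add x y _ _ hx hy => rw [map_add]; exact Submodule.add_mem _ hx hy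
  | smul c x _ hx => rw [map_smul]; exact Submodule.smul_mem _ c hx

lemma Δ_mem_leftSpan_blockWord (S : BraidedStr θ q) {N : ℕ} {i : Fin θ} (j : Fin θ)
    (hy : IsPrimitiveIn S (gen θ i ^ N)) {u : TV θ} (hu : u ∈ blockSpan N i j) :
    S.Δ u ∈ leftSpan (Set.range (blockWord N i j)) := by
  suffices blockSpan N i j ≤ (leftSpan (Set.range (blockWord N i j))).comap S.Δ from this hu
  refine Submodule.span_le.2 ?_
  rintro _ ⟨l, rfl⟩
  change S.Δ (wordElem θ (blockWord N i j l)) ∈ leftSpan (Set.range (blockWord N i j))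
  induction l with
  | nil =>
    rw [blockWord, wordElem_nil, S.Δ_one]
    exact Submodule.subset_span ⟨[], ⟨[], rfl⟩, 1, rfl⟩
  | cons s l ih =>
    cases s with
    | false =>
      rw [← gen_mul_blockWord, ← wordElem_singleton]
      refine Δ_wordElem_mul_mem_leftSpan S (isPrimitiveIn_wordElem_singleton S j) ?_ ih
      rintro _ ⟨l', rfl⟩
      exact ⟨false :: l', rfl⟩
    | true =>
      rw [← gen_pow_mul_blockWord, ← wordElem_replicate]
      refine Δ_wordElem_mul_mem_leftSpan S (by rwa [wordElem_replicate]) ?_ ih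
      rintro _ ⟨l', rfl⟩
      exact ⟨true :: l', rfl⟩

lemma isSkewPair_contract (S : BraidedStr θ q) {N : ℕ} (hN : 2 ≤ N) {i j : Fin θ} (hij : i ≠ j)
    (hq : IsPrimitiveRoot (q i i : ℂ) N) {f : TV θ →ₗ[ℂ] ℂ}
    (hf : ∀ l, f (wordElem θ (blockWord N i j l)) = if l = [true] then 1 else 0) :
    IsSkewPair (blockSpan N i j) (contract S f) (skewDer S j) (gen θ j) (gen θ i ^ N)
      ((q j i : ℂ) ^ N) ((q i j : ℂ) ^ N) (q j j) := by
  have hy : IsPrimitiveIn S (gen θ i ^ N) := isPrimitiveIn_gen_pow S hN hq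
  have hd : degW θ (blockWord N i j [true]) = Pi.single i N := by
    simp [blockWord, degW_replicate]
  have F_one : contract S f 1 = 0 := by
    have := hf []
    rw [blockWord, wordElem_nil] at this
    rw [contract_one, this]
    simp
  have F_y_mul : ∀ u ∈ blockSpan N i j,
      contract S f (gen θ i ^ N * u) = u + gen θ i ^ N * contract S f u := by
    intro u hu
    have h := contract_wordElem_mul S (v := List.replicate N i) (by rwa [wordElem_replicate])
      (Δ_mem_leftSpan_blockWord S j hy hu) (h := f) (α := 1) (χ := 1) ?_ ?_
    · simpa [wordElem_replicate] using h
    · rintro _ ⟨l, rfl⟩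
      rw [wordElem_replicate, gen_pow_mul_blockWord, hf, coord_wordElem]
      simp [blockWord_eq_nil_iff hN]
    · rintro _ ⟨l, rfl⟩
      rw [hf]
      split_ifs with hl
      · rw [hl, hd, degW_replicate, qf_single, pow_mul, hq.pow_eq_one, one_pow]
      · simp
  have F_x_mul : ∀ u ∈ blockSpan N i j, contract S f (gen θ j * u)
      = (q j i : ℂ) ^ N • (gen θ j * contract S f u) := by
    intro u hu
    have h := contract_wordElem_mul S (isPrimitiveIn_wordElem_singleton S j)
      (Δ_mem_leftSpan_blockWord S j hy hu) (h := f) (α := 0) (χ := (q j i : ℂ) ^ N) ?_ ?_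
    · simpa [wordElem_singleton] using h
    · rintro _ ⟨l, rfl⟩
      rw [wordElem_singleton, gen_mul_blockWord, hf]
      simp
    · rintro _ ⟨l, rfl⟩
      rw [hf]
      split_ifs with hl
      · rw [hl, hd, degW_singleton, qf_single, one_mul]
      · simp
  refine
    { one_mem := wordElem_blockWord_mem N i j []
      y_mul_mem := fun u hu => gen_pow_mul_mem_blockSpan N i j hu
      x_mul_mem := fun u hu => gen_mul_mem_blockSpan N i j hu
      F_mem := fun u hu => ?_
      F_y_mul := F_y_mul
      F_x_mul := F_x_mul
      G_y_mul := fun u _ => skewDer_gen_pow_mul_of_ne S hij N u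
      G_x_mul := fun u _ => by rw [skewDer_gen_mul, if_pos rfl, one_smul]
      F_one := F_one
      G_one := skewDer_one S j }
  suffices blockSpan N i j ≤ (blockSpan N i j).comap (contract S f) from this hu
  refine Submodule.span_le.2 ?_
  rintro _ ⟨l, rfl⟩
  change contract S f (wordElem θ (blockWord N i j l)) ∈ blockSpan N i j
  induction l with
  | nil => rw [blockWord, wordElem_nil, F_one]; exact Submodule.zero_mem _
  | cons s l ih =>
    cases s with
    | false =>
      rw [← gen_mul_blockWord, F_x_mul _ (wordElem_blockWord_mem N i j l)]
      exact Submodule.smul_mem _ _ (gen_mul_mem_blockSpan N i j ih)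
    | true =>
      rw [← gen_pow_mul_blockWord, F_y_mul _ (wordElem_blockWord_mem N i j l)]
      exact Submodule.add_mem _ (wordElem_blockWord_mem N i j l) (gen_pow_mul_mem_blockSpan N i j ih)

/-- A functional vanishing on `I` that picks out `x_i^N` among the words in `x_i^N` and `x_j`. -/
lemma IsPreNicholsIdeal.exists_functional {S : BraidedStr θ q} {I : Submodule ℂ (TV θ)}
    (hI : IsPreNicholsIdeal S I) {i j : Fin θ} (hij : i ≠ j) {N : ℕ} (hN : 2 ≤ N)
    (hq : IsPrimitiveRoot (q i i : ℂ) N) (hab : (q j i : ℂ) ^ N * (q i j : ℂ) ^ N ≠ 1)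
    (hy : gen θ i ^ N ∉ I) :
    ∃ f : TV θ →ₗ[ℂ] ℂ, (∀ u ∈ I, f u = 0) ∧
      ∀ l, f (wordElem θ (blockWord N i j l)) = if l = [true] then 1 else 0 := by
  have hmem : gen θ i ^ N ∉
      I ⊔ Submodule.span ℂ {gen θ j ^ N} ⊔ LinearMap.ker (degProj (θ := θ) N) := by
    intro h
    obtain ⟨v, hv, k, hk, hvk⟩ := Submodule.mem_sup.1 h
    obtain ⟨u, hu, w, hw, rfl⟩ := Submodule.mem_sup.1 hv
    obtain ⟨c, rfl⟩ := Submodule.mem_span_singleton.1 hw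
    have h' := congrArg (degProj N) hvk
    rw [map_add, map_add, LinearMap.mem_ker.1 hk, map_smul, ← wordElem_replicate,
      ← wordElem_replicate, degProj_wordElem, degProj_wordElem, if_pos (by simp),
      if_pos (by simp), add_zero, wordElem_replicate, wordElem_replicate] at h'
    refine hI.gen_pow_sub_notMem hij hN hq hab hy c ?_
    rw [← h', add_sub_cancel_right]
    exact hI.degProj_mem N hu
  obtain ⟨f, hfy, hf⟩ := Submodule.exists_le_ker_of_notMem hmem
  have hfI : ∀ u ∈ I, f u = 0 := fun u hu => hf (le_sup_left (α := Submodule ℂ (TV θ))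
    (le_sup_left (α := Submodule ℂ (TV θ)) hu))
  have hfj : f (gen θ j ^ N) = 0 := hf (le_sup_left (α := Submodule ℂ (TV θ))
    (le_sup_right (α := Submodule ℂ (TV θ)) (Submodule.mem_span_singleton_self _)))
  have hfd : ∀ w : List (Fin θ), w.length ≠ N → f (wordElem θ w) = 0 := fun w hw =>
    hf (le_sup_right (α := Submodule ℂ (TV θ)) (by
      rw [LinearMap.mem_ker, degProj_wordElem, if_neg hw]))
  refine ⟨(f (gen θ i ^ N))⁻¹ • f, fun u hu => by simp [hfI u hu], fun l => ?_⟩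
  rw [LinearMap.smul_apply, smul_eq_mul]
  split_ifs with hl
  · rw [hl, ← gen_pow_mul_blockWord, blockWord, wordElem_nil, mul_one, inv_mul_cancel₀ hfy]
  · refine mul_eq_zero_of_right _ ?_
    rcases eq_of_length_blockWord hN i j l with ⟨n, hn⟩ | h | h
    · by_cases hnN : n = N
      · rw [hn, hnN, wordElem_replicate, hfj]
      · exact hfd _ (by rw [hn, List.length_replicate]; exact hnN)
    · exact absurd h hl
    · exact hfd _ h.ne'

end Blocks

lemma exists_const_mul_pow_lt_two_pow (C d N : ℕ) :
    ∃ k : ℕ, C * (k * k * N + 1) ^ d < 2 ^ k := by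
  have h := (tendsto_pow_const_div_const_pow_of_one_lt (2 * d) (r := 2) one_lt_two).const_mul
    ((C : ℝ) * (N + 1) ^ d)
  rw [mul_zero] at h
  obtain ⟨k, hk, hk1⟩ := ((h.eventually_lt_const one_pos).and
    (Filter.eventually_ge_atTop 1)).exists
  refine ⟨k, ?_⟩
  have hle : C * (k * k * N + 1) ^ d ≤ C * (N + 1) ^ d * k ^ (2 * d) := by
    rw [mul_assoc C, pow_mul, ← mul_pow]
    gcongr
    nlinarith
  refine lt_of_le_of_lt hle ?_
  rw [← mul_div_assoc, div_lt_one (by positivity)] at hk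
  exact_mod_cast hk

/-- A non-Cartan vertex `i` of finite order `N` has `q̃_{ij}^N ≠ 1` for some `j`. -/
lemma pow_orderOf_ne_one {θ : ℕ} {q : Fin θ → Fin θ → ℂˣ} {i j : Fin θ}
    (hN : 2 ≤ orderOf (q i i))
    (hnc : q i j * q j i ≠ q i i ^ (-(Int.ofNat (sInf (cSet q i j))))) :
    (q i j * q j i) ^ orderOf (q i i) ≠ 1 := by
  intro h
  have hq : IsPrimitiveRoot (q i i) (orderOf (q i i)) := IsPrimitiveRoot.orderOf _
  have hcart : ∀ n : ℕ, (q i i : ℂ) ^ n * qtil q i j = 1 →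
      q i j * q j i = q i i ^ (-(Int.ofNat n)) := by
    intro n hn
    rw [zpow_neg, eq_inv_iff_mul_eq_one, Int.ofNat_eq_natCast, zpow_natCast, mul_comm]
    exact Units.ext (by simpa [qtil] using hn)
  have : NeZero (orderOf (q i i)) := ⟨by omega⟩
  have hqC : IsPrimitiveRoot (q i i : ℂ) (orderOf (q i i)) :=
    IsPrimitiveRoot.coe_units_iff.2 hq
  obtain ⟨m, hm, hmq⟩ := hqC.eq_pow_of_pow_eq_one (ξ := (((q i j * q j i)⁻¹ : ℂˣ) : ℂ)) (by
    rw [← Units.val_pow_eq_pow_val, inv_pow, h, inv_one, Units.val_one])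
  have hm1 : (q i i : ℂ) ^ m * qtil q i j = 1 := by
    rw [hmq, qtil, ← Units.val_mul, ← Units.val_mul, inv_mul_cancel, Units.val_one]
  have hmS : m ∈ cSet q i j := by
    change _ * _ = _
    rw [hm1, sub_self, mul_zero]
  have hle : sInf (cSet q i j) ≤ m := Nat.sInf_le hmS
  rcases mul_eq_zero.1 (Nat.sInf_mem ⟨m, hmS⟩ : sInf (cSet q i j) ∈ cSet q i j) with h0 | h0
  · rw [qnum_eq_zero_iff (hqC.ne_one (by omega))] at h0
    have := Nat.le_of_dvd (Nat.succ_pos _) (hqC.dvd_of_pow_eq_one _ h0)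
    have he : m = sInf (cSet q i j) := by omega
    rw [he] at hm1
    exact hnc (hcart _ hm1)
  · exact hnc (hcart _ (sub_eq_zero.1 h0).symm)

/-- Lemma 3.1(d): if `i` is a non-Cartan vertex, i.e.
`q̃_{ij} ≠ q_{ii}^{c_{ij}}` for some `j ≠ i`, then `x_i^{N_i} = 0`
(`N_i = ord q_{ii}`) in every finite-GKdim pre-Nichols algebra of `q`. -/
theorem statement_4 (θ : ℕ) (q : Fin θ → Fin θ → ℂˣ) (S : BraidedStr θ q)
    (hconn : (dynkin q).Connected)
    (hfd : FiniteDimensional ℂ (TV θ ⧸ Jq S))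
    (hAAH : AAH)
    (I : Submodule ℂ (TV θ)) (hI : IsPreNicholsIdeal S I) (hGK : FinGK I)
    (i : Fin θ)
    (hnc : ∃ j : Fin θ, j ≠ i ∧ q i j * q j i ≠ q i i ^ (-(Int.ofNat (sInf (cSet q i j))))) :
    gen θ i ^ orderOf (q i i) ∈ I := by
  obtain ⟨j, hji, hj⟩ := hnc
  by_contra hy
  have hN := two_le_orderOf S i
  have hpow := pow_orderOf_ne_one hN hj
  generalize hNdef : orderOf (q i i) = N at *
  have hq : IsPrimitiveRoot (q i i : ℂ) N :=
    IsPrimitiveRoot.coe_units_iff.2 (hNdef ▸ IsPrimitiveRoot.orderOf _)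
  have hab : (q j i : ℂ) ^ N * (q i j : ℂ) ^ N ≠ 1 := fun h => hpow <| Units.ext <| by
    rw [Units.val_pow_eq_pow_val, Units.val_mul, mul_pow, mul_comm, h, Units.val_one]
  obtain ⟨f, hfI, hf⟩ := hI.exists_functional hji.symm hN hq hab hy
  obtain ⟨C, d, hCd⟩ := hGK
  obtain ⟨k, hk⟩ := exists_const_mul_pow_lt_two_pow C d N
  have hx : gen θ j ∈ Wfil θ N :=
    Wfil_mono (by simp; omega) (wordElem_singleton j ▸ wordElem_mem_Wfil [j])
  have hyW : gen θ i ^ N ∈ Wfil θ N := by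
    simpa [wordElem_replicate] using wordElem_mem_Wfil (List.replicate N i)
  obtain ⟨ι, _, s, hcard, hs, hli⟩ :=
    (isSkewPair_contract S hN hji.symm hq hf).exists_linearIndependent hab
      (fun u hu => contract_mem S hI hfI hu) (fun u hu => hI.skewDer_mem j hu) hI.one_notMem
      Wfil_mono (wordElem_mem_Wfil []) mul_mem_Wfil hx hyW k 0
  have hle : 2 ^ k ≤ Module.finrank ℂ ((Wfil θ (k * k * N)).map I.mkQ) := by
    have hmem : ∀ r, (I.mkQ ∘ s) r ∈ (Wfil θ (k * k * N)).map I.mkQ := fun r =>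
      ⟨s r, by simpa using (hs r).2.2, rfl⟩
    rw [← hcard]
    let v : _ → (Wfil θ (k * k * N)).map I.mkQ := fun r => ⟨(I.mkQ ∘ s) r, hmem r⟩
    have hv : LinearIndependent _ v := LinearIndependent.of_comp (Submodule.subtype _) hli
    exact hv.fintype_card_le_finrank
  exact absurd (hle.trans (hCd _)) (not_le.2 hk)

end PreNicholsPaper
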